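/- Let 2 < p < ∞, -1 < α < ∞, and let q be the conjugate exponent of p. Let k ∈ A^q_α be nonzero with ‖k(e^{it}·) + k(e^{-it}·) - 2k(·)‖_{q,α} ≤ ‖k‖_{Λ*,β,A^q_α} |t|^β for all real t, where 0 < β ≤ 2, and suppose k is normalized so that the extremal function F for k satisfies ∫_𝔻 F k̄ dA_α = 1. Let F_n be the degree-n extremal polynomial for the functional φ(f) = ∫_𝔻 f k̄ dA_α, and let A_γ = (2^{1+γ}/π) ∫_0^∞ |cos t - cos 2t| t^{γ-2} dt. Then for every n ≥ 1, ‖F - F_n‖_{p,α} ≤ 2^{1 + 1/p - 1/p²} p^{1/p + 1/p²} A_{β/p}^{1/p} ‖k‖_{Λ*,β,A^q_α}^{1/p²} n^{-β/p²}. In particular ‖F - F_n‖_{p,α} = O(n^{-β/p²}). -/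

import Mathlib

/-!
The proof has three ingredients.

*Uniform convexity.* The normalization `∫ F k̄ = 1` makes the functional `φ` with kernel `k` of norm
one. If `‖G‖ ≤ 1` and `Re φ(G) ≥ 1 - 2η`, then `‖(F + G)/2‖ ≥ 1 - η`, and Clarkson's inequality
together with Bernoulli's gives `‖F - G‖ ≤ 2 (p η)^{1/p}` (`dist_extremal_le`). This is used twice.

*Smoothness of `F`.* Take `G(z) = (F(e^{it}z) + F(e^{-it}z))/2`. Since `dA_α` is rotation invariant,
`φ(G)` is `1` plus half the pairing of `F` with the second difference of `k`, so
`Re φ(G) ≥ 1 - M |t|^β / 2` and the second difference of `F` has norm at most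
`4 (p M |t|^β / 4)^{1/p}` (`extremal_smooth`). Thus `F` is smooth of order `γ = β/p`, and `γ < 1`
because `β ≤ 2 < p`.

*Polynomial approximation.* The kernel `(cos(ns/2) - cos(ns))/s²` on `(0, ∞)` has a cosine transform
that vanishes at all integers `j ≥ n`. Integrating the second differences of `F` against it
therefore produces a polynomial of degree below `n` minus `F`, and Minkowski's integral inequality
bounds the error by `A_γ n^{-γ} / 2` times the smoothness constant (`exists_poly_approx`).

A polynomial within `δ` of `F`, after scaling to norm at most one, is a competitor for `F_n`, so
`φ(F_n) ≥ 1 - 2δ`, and uniform convexity applied to `G = F_n` gives `‖F - F_n‖ ≤ 2 (p δ)^{1/p}`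
(`dist_extremalPoly_le`). Inserting `δ` yields the claim, with `2^{1+1/p-2/p²}` in place of
`2^{1+1/p-1/p²}`.
-/


open MeasureTheory Complex Set Metric

noncomputable section

/-- The open unit disc in `ℂ`. -/
def unitDisc : Set ℂ := Metric.ball 0 1

/-- The density of the weighted measure `dA_α = (α+1) π⁻¹ (1-|z|²)^α dA`
with respect to area measure. -/
def wt (α : ℝ) (z : ℂ) : ℝ := (α + 1) / Real.pi * (1 - ‖z‖ ^ 2) ^ α

/-- The norm `‖f‖_{p,α}` of the weighted Bergman space `A^p_α`. -/
def bNorm (p α : ℝ) (f : ℂ → ℂ) : ℝ :=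
  (∫ z in unitDisc, ‖f z‖ ^ p * wt α z) ^ (1 / p)

/-- Membership in the weighted Bergman space `A^p_α`: analytic on the unit disc
with finite weighted `p`-norm. -/
def MemAp (p α : ℝ) (f : ℂ → ℂ) : Prop :=
  DifferentiableOn ℂ f unitDisc ∧
    IntegrableOn (fun z => ‖f z‖ ^ p * wt α z) unitDisc

/-- `E_n^{p,α}(f)`: the distance from `f` to the polynomials of degree at most `n`
in the `A^p_α` norm. -/
def polyErr (p α : ℝ) (n : ℕ) (f : ℂ → ℂ) : ℝ :=
  sInf {e | ∃ P : Polynomial ℂ, P.natDegree ≤ n ∧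
    e = bNorm p α fun z => f z - P.eval z}

/-- The pairing `∫_𝔻 f k̄ dA_α`. -/
def pairing (α : ℝ) (f k : ℂ → ℂ) : ℂ :=
  ∫ z in unitDisc, f z * (starRingEnd ℂ) (k z) * (wt α z : ℂ)

/-- `F` is the extremal function in `A^p_α` for the integral kernel `k`:
it has unit norm and maximizes `Re ∫_𝔻 F k̄ dA_α` over the unit ball. -/
def IsExtremalFor (p α : ℝ) (k F : ℂ → ℂ) : Prop :=
  MemAp p α F ∧ bNorm p α F = 1 ∧
    ∀ g, MemAp p α g → bNorm p α g ≤ 1 →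
      (pairing α g k).re ≤ (pairing α F k).re

/-- `Q` is the degree-`n` extremal polynomial for the kernel `k`: it has degree
at most `n`, unit `A^p_α` norm, and maximizes `Re ∫_𝔻 P k̄ dA_α` among
polynomials of degree at most `n` in the unit ball. -/
def IsExtremalPolyFor (p α : ℝ) (k : ℂ → ℂ) (n : ℕ) (Q : Polynomial ℂ) : Prop :=
  Q.natDegree ≤ n ∧ bNorm p α (fun z => Q.eval z) = 1 ∧
    ∀ P : Polynomial ℂ, P.natDegree ≤ n → bNorm p α (fun z => P.eval z) ≤ 1 →
      (pairing α (fun z => P.eval z) k).re ≤ (pairing α (fun z => Q.eval z) k).re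

/-- The constant `A_γ = (2^{1+γ}/π) ∫_0^∞ |cos t - cos 2t| t^{γ-2} dt`. -/
def Acoef (γ : ℝ) : ℝ :=
  2 ^ (1 + γ) / Real.pi *
    ∫ t in Set.Ioi (0:ℝ), |Real.cos t - Real.cos (2*t)| * t ^ (γ - 2)

/-! ### The de la Vallée Poussin kernel -/

/-- The Laplace transform of `1 - cos`, multiplied by its variable `t`: the value is
`1 / (1 + t²)`. -/
lemma laplace_one_sub_cos {t : ℝ} (ht : 0 < t) :
    ∫⁻ x in Ioi (0:ℝ), ENNReal.ofReal ((1 - Real.cos x) * (t * Real.exp (-(t * x))))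
      = ENNReal.ofReal ((1 + t ^ 2)⁻¹) := by
  set G : ℝ → ℝ := fun x => Real.exp (-(t * x)) *
    (-1 + t * (t * Real.cos x - Real.sin x) / (1 + t ^ 2)) with hG
  have hpos : (0:ℝ) < 1 + t ^ 2 := by positivity
  have hd : ∀ x ∈ Ici (0:ℝ), HasDerivAt G ((1 - Real.cos x) * (t * Real.exp (-(t * x)))) x := by
    intro x _
    have h1 : HasDerivAt (fun x : ℝ => Real.exp (-(t * x))) (Real.exp (-(t * x)) * (-(t * 1))) x :=
      (((hasDerivAt_id x).const_mul t).neg).exp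
    have h2 : HasDerivAt (fun x : ℝ => -1 + t * (t * Real.cos x - Real.sin x) / (1 + t ^ 2))
        (t * (t * (-Real.sin x) - Real.cos x) / (1 + t ^ 2)) x :=
      (((((Real.hasDerivAt_cos x).const_mul t).sub (Real.hasDerivAt_sin x)).const_mul
        t).div_const _).const_add _
    refine (h1.mul h2).congr_deriv ?_
    field_simp
    ring
  have hnn : ∀ x ∈ Ioi (0:ℝ), 0 ≤ (1 - Real.cos x) * (t * Real.exp (-(t * x))) := by
    intro x _
    have := Real.cos_le_one x
    have : 0 ≤ 1 - Real.cos x := by linarith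
    positivity
  have hlim : Filter.Tendsto G Filter.atTop (nhds 0) := by
    have he : Filter.Tendsto (fun x : ℝ => Real.exp (-(t * x))) Filter.atTop (nhds 0) :=
      Real.tendsto_exp_neg_atTop_nhds_zero.comp (Filter.tendsto_id.const_mul_atTop ht)
    refine squeeze_zero_norm (a := fun x => Real.exp (-(t*x)) * (1 + t * (t + 1) / (1 + t^2))) ?_
      (by simpa using he.mul_const _)
    intro x
    rw [hG, norm_mul, Real.norm_of_nonneg (Real.exp_pos _).le]
    gcongr
    refine (norm_add_le _ _).trans ?_
    rw [norm_neg, norm_one, norm_div, norm_mul, Real.norm_of_nonneg ht.le,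
      Real.norm_of_nonneg hpos.le]
    gcongr
    refine (norm_sub_le _ _).trans ?_
    rw [norm_mul, Real.norm_of_nonneg ht.le, Real.norm_eq_abs, Real.norm_eq_abs]
    have := Real.abs_cos_le_one x
    have := Real.abs_sin_le_one x
    nlinarith
  have hint := integrableOn_Ioi_deriv_of_nonneg' hd hnn hlim
  have hval := integral_Ioi_of_hasDerivAt_of_tendsto' hd hint hlim
  rw [← ofReal_integral_eq_lintegral_ofReal hint
    ((ae_restrict_iff' measurableSet_Ioi).2 (Filter.Eventually.of_forall hnn)), hval]
  congr 1
  simp only [hG]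
  simp
  field_simp
  ring

lemma laplace_self {x : ℝ} (hx : 0 < x) :
    ∫⁻ t in Ioi (0:ℝ), ENNReal.ofReal (t * Real.exp (-(t * x))) = ENNReal.ofReal (x ^ 2)⁻¹ := by
  have hval := Real.integral_rpow_mul_exp_neg_mul_Ioi (a := 2) (r := x) (by norm_num) hx
  have hval' : ∫ t in Ioi (0:ℝ), t * Real.exp (-(t * x)) = (x ^ 2)⁻¹ := by
    rw [show (x ^ 2)⁻¹ = (1 / x) ^ (2:ℝ) * Real.Gamma 2 by
      rw [Real.Gamma_two]; simp, ← hval]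
    refine setIntegral_congr_fun measurableSet_Ioi fun t ht => ?_
    norm_num [mul_comm]
  rw [← hval', ofReal_integral_eq_lintegral_ofReal]
  · by_contra h
    have h0 : ∫ t in Ioi (0:ℝ), t * Real.exp (-(t * x)) = 0 := integral_undef h
    rw [hval'] at h0
    have : (0:ℝ) < (x ^ 2)⁻¹ := by positivity
    linarith
  · refine (ae_restrict_iff' measurableSet_Ioi).2 (Filter.Eventually.of_forall fun t ht => ?_)
    have : (0:ℝ) < t := ht
    simp only [Pi.zero_apply]
    positivity

/-- `∫₀^∞ (1 - cos x) / x² dx = π / 2`, by Tonelli's theorem after writing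
`1 / x² = ∫₀^∞ t e^{-tx} dt`. The lower integral avoids any prior knowledge of integrability. -/
lemma lintegral_one_sub_cos :
    ∫⁻ x in Ioi (0:ℝ), ENNReal.ofReal ((1 - Real.cos x) / x ^ 2)
      = ENNReal.ofReal (Real.pi / 2) := by
  have h1 : ∫⁻ x in Ioi (0:ℝ), ENNReal.ofReal ((1 - Real.cos x) / x ^ 2)
      = ∫⁻ x in Ioi (0:ℝ), ∫⁻ t in Ioi (0:ℝ),
        ENNReal.ofReal ((1 - Real.cos x) * (t * Real.exp (-(t * x)))) := by
    refine setLIntegral_congr_fun measurableSet_Ioi fun x hx => ?_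
    have hx0 : 0 ≤ 1 - Real.cos x := by linarith [Real.cos_le_one x]
    simp_rw [ENNReal.ofReal_mul hx0]
    rw [lintegral_const_mul _ (by fun_prop), laplace_self hx, ← ENNReal.ofReal_mul hx0,
      div_eq_mul_inv]
  have h2 : ∫⁻ t in Ioi (0:ℝ), ∫⁻ x in Ioi (0:ℝ),
        ENNReal.ofReal ((1 - Real.cos x) * (t * Real.exp (-(t * x))))
      = ∫⁻ t in Ioi (0:ℝ), ENNReal.ofReal ((1 + t ^ 2)⁻¹) :=
    setLIntegral_congr_fun measurableSet_Ioi fun t ht => laplace_one_sub_cos ht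
  rw [h1, lintegral_lintegral_swap (by fun_prop), h2, ← ofReal_integral_eq_lintegral_ofReal
    integrable_inv_one_add_sq.integrableOn
    (Filter.Eventually.of_forall fun t => by simp only [Pi.zero_apply]; positivity),
    integral_Ioi_inv_one_add_sq]
  simp

lemma integrableOn_one_sub_cos :
    IntegrableOn (fun x : ℝ => (1 - Real.cos x) / x ^ 2) (Ioi 0) := by
  refine ⟨Measurable.aestronglyMeasurable (by fun_prop), ?_⟩
  rw [hasFiniteIntegral_iff_ofReal, lintegral_one_sub_cos]
  · exact ENNReal.ofReal_lt_top
  · refine Filter.Eventually.of_forall fun x => ?_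
    have : 0 ≤ 1 - Real.cos x := by linarith [Real.cos_le_one x]
    simp only [Pi.zero_apply]
    positivity

lemma integral_one_sub_cos :
    ∫ x in Ioi (0:ℝ), (1 - Real.cos x) / x ^ 2 = Real.pi / 2 := by
  rw [integral_eq_lintegral_of_nonneg_ae, lintegral_one_sub_cos, ENNReal.toReal_ofReal]
  · positivity
  · refine Filter.Eventually.of_forall fun x => ?_
    have : 0 ≤ 1 - Real.cos x := by linarith [Real.cos_le_one x]
    simp only [Pi.zero_apply]
    positivity
  · exact integrableOn_one_sub_cos.1

/-- Scaling reduces `∫₀^∞ (1 - cos ax)/x² dx` to the case `a = 1`. -/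
lemma one_sub_cos_mul (a : ℝ) :
    IntegrableOn (fun x : ℝ => (1 - Real.cos (a * x)) / x ^ 2) (Ioi 0) ∧
    ∫ x in Ioi (0:ℝ), (1 - Real.cos (a * x)) / x ^ 2 = Real.pi / 2 * |a| := by
  rcases eq_or_ne a 0 with rfl | ha
  · simp
  have hb : 0 < |a| := abs_pos.2 ha
  have hfun : (fun x : ℝ => (1 - Real.cos (a * x)) / x ^ 2)
      = fun x => |a| ^ 2 * ((fun y : ℝ => (1 - Real.cos y) / y ^ 2) (|a| * x)) := by
    ext x
    have : Real.cos (|a| * x) = Real.cos (a * x) := by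
      rcases abs_choice a with h | h <;> rw [h]
      rw [neg_mul, Real.cos_neg]
    simp only [this]
    field_simp
  rw [hfun]
  constructor
  · have := (integrableOn_Ioi_comp_mul_left_iff (fun y : ℝ => (1 - Real.cos y) / y ^ 2) 0 hb).2
      (by simpa using integrableOn_one_sub_cos)
    exact this.const_mul _
  · rw [integral_const_mul, integral_comp_mul_left_Ioi (fun y : ℝ => (1 - Real.cos y) / y ^ 2) 0 hb]
    simp only [mul_zero, integral_one_sub_cos, smul_eq_mul]
    field_simp

/-- The de la Vallée Poussin kernel on the line, for frequencies up to `n`, without its normalizing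
constant: on `(0, ∞)` its integral is `π n / 4`. -/
def vpKer (n : ℕ) (x : ℝ) : ℝ := (Real.cos (n / 2 * x) - Real.cos (n * x)) / x ^ 2

lemma vpKer_integrable (n : ℕ) : IntegrableOn (vpKer n) (Ioi 0) := by
  have := (one_sub_cos_mul n).1.sub (one_sub_cos_mul (n / 2)).1
  refine this.congr_fun (fun x _ => ?_) measurableSet_Ioi
  simp only [vpKer, Pi.sub_apply]
  ring

/-- The cosine transform of the kernel is a trapezoid function of the frequency `j`: constant for
`j ≤ n / 2` and zero for `j ≥ n`. -/
lemma vpKer_cos_integral (n j : ℕ) :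
    ∫ x in Ioi (0:ℝ), Real.cos (j * x) * vpKer n x
      = Real.pi / 4 * (|(n:ℝ) + j| + |(n:ℝ) - j| - |(n:ℝ) / 2 + j| - |(n:ℝ) / 2 - j|) := by
  have h1 := one_sub_cos_mul ((n:ℝ) + j)
  have h2 := one_sub_cos_mul ((n:ℝ) - j)
  have h3 := one_sub_cos_mul ((n:ℝ) / 2 + j)
  have h4 := one_sub_cos_mul ((n:ℝ) / 2 - j)
  have : ∀ x : ℝ, Real.cos (j * x) * vpKer n x
      = 1 / 2 * (((1 - Real.cos (((n:ℝ) + j) * x)) / x ^ 2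
        + (1 - Real.cos (((n:ℝ) - j) * x)) / x ^ 2)
        - ((1 - Real.cos (((n:ℝ) / 2 + j) * x)) / x ^ 2
        + (1 - Real.cos (((n:ℝ) / 2 - j) * x)) / x ^ 2)) := by
    intro x
    simp only [vpKer, add_mul, sub_mul, Real.cos_add, Real.cos_sub]
    ring
  simp_rw [this]
  have e := integral_sub (h1.1.add h2.1) (h3.1.add h4.1)
  simp only [Pi.add_apply] at e
  rw [integral_const_mul, e, integral_add h1.1 h2.1,
    integral_add h3.1 h4.1, h1.2, h2.2, h3.2, h4.2]
  ring

lemma vpKer_integral (n : ℕ) : ∫ x in Ioi (0:ℝ), vpKer n x = Real.pi * n / 4 := by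
  have := vpKer_cos_integral n 0
  simp only [Nat.cast_zero, zero_mul, Real.cos_zero, one_mul, add_zero, sub_zero] at this
  rw [this, abs_of_nonneg (by positivity), abs_of_nonneg (by positivity)]
  ring

lemma vpKer_cos_integral_eq_zero {n j : ℕ} (h : n ≤ j) :
    ∫ x in Ioi (0:ℝ), Real.cos (j * x) * vpKer n x = 0 := by
  have h' : (n:ℝ) ≤ j := by exact_mod_cast h
  have hn : (0:ℝ) ≤ n := by positivity
  rw [vpKer_cos_integral, abs_of_nonneg (by positivity), abs_of_nonpos (by linarith),
    abs_of_nonneg (by positivity), abs_of_nonpos (by linarith)]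
  ring

/-- The integral defining `A_γ` converges: the integrand is `O(t^γ)` at `0` and `O(t^{γ-2})` at
infinity. -/
lemma Acoef_integrable {γ : ℝ} (h0 : 0 < γ) (h1 : γ < 1) :
    IntegrableOn (fun t : ℝ => |Real.cos t - Real.cos (2*t)| * t ^ (γ - 2)) (Ioi 0) := by
  have hm : ∀ s, AEStronglyMeasurable
      (fun t : ℝ => |Real.cos t - Real.cos (2*t)| * t ^ (γ - 2)) (volume.restrict s) := by
    intro s
    exact Measurable.aestronglyMeasurable (by fun_prop)
  rw [← Ioc_union_Ioi_eq_Ioi zero_le_one]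
  refine IntegrableOn.union ?_ ?_
  · have hi : IntegrableOn (fun t : ℝ => 5 / 2 * t ^ γ) (Ioc 0 1) := by
      have := (intervalIntegral.intervalIntegrable_rpow' (a := 0) (b := 1) (r := γ)
        (by linarith)).const_mul (5/2)
      rwa [intervalIntegrable_iff_integrableOn_Ioc_of_le zero_le_one] at this
    refine Integrable.mono' hi (hm _) ((ae_restrict_iff' measurableSet_Ioc).2
      (Filter.Eventually.of_forall fun t ht => ?_))
    have ht0 : 0 < t := ht.1
    rw [Real.norm_of_nonneg (by positivity)]
    have hb : |Real.cos t - Real.cos (2*t)| ≤ 5 / 2 * t ^ 2 := by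
      have a1 := Real.one_sub_sq_div_two_le_cos (x := t)
      have a2 := Real.one_sub_sq_div_two_le_cos (x := 2 * t)
      have a3 := Real.cos_le_one t
      have a4 := Real.cos_le_one (2 * t)
      rw [abs_le]
      constructor <;> nlinarith
    calc |Real.cos t - Real.cos (2*t)| * t ^ (γ - 2) ≤ 5 / 2 * t ^ 2 * t ^ (γ - 2) := by gcongr
      _ = 5 / 2 * t ^ γ := by
        rw [mul_assoc, ← Real.rpow_natCast, ← Real.rpow_add ht0]
        norm_num
  · have hi : IntegrableOn (fun t : ℝ => 2 * t ^ (γ - 2)) (Ioi 1) :=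
      (integrableOn_Ioi_rpow_of_lt (by linarith) one_pos).const_mul 2
    refine Integrable.mono' hi (hm _) ((ae_restrict_iff' measurableSet_Ioi).2
      (Filter.Eventually.of_forall fun t ht => ?_))
    have ht0 : 0 < t := lt_trans one_pos ht
    rw [Real.norm_of_nonneg (by positivity)]
    gcongr
    rw [abs_le]
    constructor <;> linarith [Real.cos_le_one t, Real.cos_le_one (2*t), Real.neg_one_le_cos t,
      Real.neg_one_le_cos (2*t)]

/-- The moment `∫₀^∞ s^γ |vpKer n s| ds`, expressed through `A_γ`. -/
lemma vpKer_moment {γ : ℝ} (h0 : 0 < γ) (h1 : γ < 1) {n : ℕ} (hn : 1 ≤ n) :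
    IntegrableOn (fun s : ℝ => s ^ γ * |vpKer n s|) (Ioi 0) ∧
    4 / (Real.pi * n) * ∫ s in Ioi (0:ℝ), s ^ γ * |vpKer n s|
      = Acoef γ * (n:ℝ) ^ (-γ) := by
  have hn0 : (0:ℝ) < n := by exact_mod_cast hn
  have hb : (0:ℝ) < n / 2 := by positivity
  set g : ℝ → ℝ := fun t => |Real.cos t - Real.cos (2*t)| * t ^ (γ - 2) with hg
  have hfun : ∀ s ∈ Ioi (0:ℝ), ((n:ℝ)/2) ^ (2 - γ) * g (n / 2 * s) = s ^ γ * |vpKer n s| := by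
    intro s hs
    have hs0 : (0:ℝ) < s := hs
    simp only [hg, vpKer]
    rw [abs_div, abs_of_pos (by positivity : 0 < s ^ 2), Real.mul_rpow hb.le hs0.le,
      show (2:ℝ) * (n / 2 * s) = n * s by ring]
    have e1 : ((n:ℝ)/2) ^ (2 - γ) * ((n:ℝ)/2) ^ (γ - 2) = 1 := by
      rw [← Real.rpow_add hb]; simp
    have e2 : s ^ (γ - 2) = s ^ γ / s ^ 2 := by
      rw [Real.rpow_sub hs0]; norm_num
    rw [e2]
    linear_combination (|Real.cos (n / 2 * s) - Real.cos (n * s)| * (s ^ γ / s ^ 2)) * e1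
  constructor
  · have := (integrableOn_Ioi_comp_mul_left_iff g 0 hb).2 (by simpa using Acoef_integrable h0 h1)
    exact IntegrableOn.congr_fun (this.const_mul _) hfun measurableSet_Ioi
  · rw [← setIntegral_congr_fun measurableSet_Ioi hfun, integral_const_mul,
      integral_comp_mul_left_Ioi g 0 hb, mul_zero, smul_eq_mul, Acoef, Real.rpow_neg hn0.le,
      Real.rpow_add two_pos, Real.rpow_sub hb, Real.div_rpow hn0.le two_pos.le]
    have : (0:ℝ) < n ^ γ := by positivity
    have : (0:ℝ) < 2 ^ γ := by positivity
    norm_num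
    field_simp
    rw [Real.div_rpow hn0.le two_pos.le]
    field_simp
    simp only [hg]

/-! ### The measure `dA_α` and the spaces `A^p_α` -/

/-- The measure `dA_α` on `ℂ`, supported on the unit disc. -/
def bMeas (α : ℝ) : Measure ℂ :=
  (volume.restrict unitDisc).withDensity fun z => ENNReal.ofReal (wt α z)

lemma measurableSet_unitDisc : MeasurableSet unitDisc := measurableSet_ball

lemma mem_unitDisc {z : ℂ} : z ∈ unitDisc ↔ ‖z‖ < 1 := mem_ball_zero_iff

lemma measurable_wt (α : ℝ) : Measurable (wt α) := by
  unfold wt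
  fun_prop

lemma wt_nonneg {α : ℝ} (hα : -1 < α) {z : ℂ} (hz : z ∈ unitDisc) : 0 ≤ wt α z := by
  have h : ‖z‖ < 1 := mem_unitDisc.1 hz
  have h2 : 0 ≤ 1 - ‖z‖ ^ 2 := by nlinarith [norm_nonneg z]
  have h3 : 0 < α + 1 := by linarith
  have := Real.pi_pos
  unfold wt
  positivity

section measure

variable {α : ℝ}

lemma integral_bMeas (hα : -1 < α) {E : Type*} [NormedAddCommGroup E] [NormedSpace ℝ E] (g : ℂ → E) :
    ∫ z, g z ∂(bMeas α) = ∫ z in unitDisc, wt α z • g z := by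
  rw [bMeas, integral_withDensity_eq_integral_toReal_smul (measurable_wt α).ennreal_ofReal
    (Filter.Eventually.of_forall fun _ => ENNReal.ofReal_lt_top)]
  refine setIntegral_congr_fun measurableSet_unitDisc fun z hz => ?_
  simp only [ENNReal.toReal_ofReal (wt_nonneg hα hz)]

lemma integrable_bMeas (hα : -1 < α) {E : Type*} [NormedAddCommGroup E] [NormedSpace ℝ E]
    (g : ℂ → E) :
    Integrable g (bMeas α) ↔ IntegrableOn (fun z => wt α z • g z) unitDisc := by
  rw [bMeas, integrable_withDensity_iff_integrable_smul' (measurable_wt α).ennreal_ofReal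
    (Filter.Eventually.of_forall fun _ => ENNReal.ofReal_lt_top)]
  refine integrableOn_congr_fun (fun z hz => ?_) measurableSet_unitDisc
  simp only [ENNReal.toReal_ofReal (wt_nonneg hα hz)]

lemma bNorm_eq (hα : -1 < α) (p : ℝ) (f : ℂ → ℂ) :
    bNorm p α f = (∫ z, ‖f z‖ ^ p ∂(bMeas α)) ^ (1 / p) := by
  rw [bNorm, integral_bMeas hα]
  simp only [smul_eq_mul, mul_comm]

lemma pairing_eq (hα : -1 < α) (f k : ℂ → ℂ) :
    pairing α f k = ∫ z, f z * (starRingEnd ℂ) (k z) ∂(bMeas α) := by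
  rw [pairing, integral_bMeas hα]
  simp only [Complex.real_smul, mul_comm]

lemma ae_bMeas_of_forall {P : ℂ → Prop} (h : ∀ z ∈ unitDisc, P z) : ∀ᵐ z ∂(bMeas α), P z := by
  have : ∀ᵐ z ∂(volume.restrict unitDisc), P z :=
    (ae_restrict_iff' measurableSet_unitDisc).2 (Filter.Eventually.of_forall h)
  exact (withDensity_absolutelyContinuous _ _) this

lemma aesm_of_continuousOn {f : ℂ → ℂ} (hf : ContinuousOn f unitDisc) :
    AEStronglyMeasurable f (bMeas α) :=
  (hf.aestronglyMeasurable measurableSet_unitDisc).mono_ac (withDensity_absolutelyContinuous _ _)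

/-- In polar coordinates this is the integrability of `(1 - y)^α` on `(0, 1)`. -/
lemma wt_integrableOn (hα : -1 < α) : IntegrableOn (wt α) unitDisc := by
  have h := (integrableOn_fun_norm_addHaar (E := ℂ) (μ := volume)
    (f := fun y : ℝ => (α + 1) / Real.pi * (1 - y ^ 2) ^ α) (r := 1)).2 ?_
  · exact h
  have h1 : IntervalIntegrable (fun y : ℝ => (1 - y) ^ α) volume 0 1 := by
    have := (intervalIntegral.intervalIntegrable_rpow' (a := 0) (b := 1) hα).comp_sub_left 1
    simpa using this.symm
  have h2 : IntervalIntegrable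
      (fun y : ℝ => (1 - y) ^ α * (y * ((α + 1) / Real.pi * (1 + y) ^ α))) volume 0 1 := by
    refine h1.mul_continuousOn ?_
    rw [uIcc_of_le zero_le_one]
    refine continuousOn_id.mul (continuousOn_const.mul (ContinuousOn.rpow_const (by fun_prop) ?_))
    intro x hx
    left
    linarith [hx.1]
  rw [intervalIntegrable_iff_integrableOn_Ioo_of_le zero_le_one] at h2
  refine h2.congr_fun (fun y hy => ?_) measurableSet_Ioo
  have hy0 := hy.1
  have hy1 := hy.2
  have : (1 - y ^ 2) ^ α = (1 - y) ^ α * (1 + y) ^ α := by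
    rw [← Real.mul_rpow (by linarith) (by linarith)]
    ring_nf
  simp [this]
  ring

lemma isFiniteMeasure_bMeas (hα : -1 < α) : IsFiniteMeasure (bMeas α) := by
  have : Integrable (fun _ : ℂ => (1:ℝ)) (bMeas α) := by
    rw [integrable_bMeas hα]
    simpa using wt_integrableOn hα
  simpa [integrable_const_iff] using this

lemma wt_rot {c : ℂ} (hc : ‖c‖ = 1) (z : ℂ) : wt α (c * z) = wt α z := by
  simp [wt, hc]

lemma rot_mem {c : ℂ} (hc : ‖c‖ = 1) {z : ℂ} : c * z ∈ unitDisc ↔ z ∈ unitDisc := by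
  simp [mem_unitDisc, hc]

/-- `dA_α` is invariant under rotations. -/
lemma measurePreserving_rot {c : ℂ} (hc : ‖c‖ = 1) :
    MeasurePreserving (fun z => c * z) (bMeas α) (bMeas α) := by
  have h0 : MeasurePreserving (fun z : ℂ => c * z) volume volume := by
    have := (rotation (⟨c, by simp [Submonoid.unitSphere, hc]⟩ : Circle)).measurePreserving
    exact this
  have h1 : MeasurePreserving (fun z : ℂ => c * z) (volume.restrict unitDisc)
      (volume.restrict unitDisc) := by
    have := h0.restrict_preimage measurableSet_unitDisc
    rwa [show (fun z : ℂ => c * z) ⁻¹' unitDisc = unitDisc by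
      ext z; exact rot_mem hc] at this
  refine ⟨h0.measurable, ?_⟩
  ext s hs
  rw [Measure.map_apply h0.measurable hs, bMeas, withDensity_apply _ hs,
    withDensity_apply _ (h0.measurable hs),
    ← h1.setLIntegral_comp_preimage hs (measurable_wt α).ennreal_ofReal]
  simp only [wt_rot hc]

end measure

section Lp

variable {α p q : ℝ}

lemma bNorm_nonneg (hα : -1 < α) (p : ℝ) (f : ℂ → ℂ) : 0 ≤ bNorm p α f := by
  rw [bNorm_eq hα]
  positivity

lemma bNorm_rpow (hα : -1 < α) (hp : 0 < p) (f : ℂ → ℂ) :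
    bNorm p α f ^ p = ∫ z, ‖f z‖ ^ p ∂(bMeas α) := by
  rw [bNorm_eq hα, ← Real.rpow_mul (by positivity), one_div_mul_cancel hp.ne', Real.rpow_one]

lemma bNorm_congr {f g : ℂ → ℂ} (h : ∀ z ∈ unitDisc, f z = g z) : bNorm p α f = bNorm p α g := by
  unfold bNorm
  congr 1
  exact setIntegral_congr_fun measurableSet_unitDisc fun z hz => by simp only [h z hz]

lemma MemAp.memLp (hα : -1 < α) (hp : 0 < p) {f : ℂ → ℂ} (h : MemAp p α f) :
    MemLp f (ENNReal.ofReal p) (bMeas α) := by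
  rw [← integrable_norm_rpow_iff (aesm_of_continuousOn h.1.continuousOn)
    (by simpa using hp) ENNReal.ofReal_ne_top, ENNReal.toReal_ofReal hp.le, integrable_bMeas hα]
  simpa [mul_comm] using h.2

lemma memAp_of_memLp (hα : -1 < α) (hp : 0 < p) {f : ℂ → ℂ} (h : DifferentiableOn ℂ f unitDisc)
    (hf : MemLp f (ENNReal.ofReal p) (bMeas α)) : MemAp p α f := by
  refine ⟨h, ?_⟩
  rw [← integrable_norm_rpow_iff hf.1
    (by simpa using hp) ENNReal.ofReal_ne_top, ENNReal.toReal_ofReal hp.le, integrable_bMeas hα] at hf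
  simpa [mul_comm] using hf

lemma bNorm_eq_lpNorm (hα : -1 < α) (hp : 0 < p) {f : ℂ → ℂ}
    (hf : AEStronglyMeasurable f (bMeas α)) :
    bNorm p α f = lpNorm f (ENNReal.ofReal p) (bMeas α) := by
  rw [bNorm_eq hα, lpNorm_eq_integral_norm_rpow_toReal (by simpa using hp) ENNReal.ofReal_ne_top hf,
    ENNReal.toReal_ofReal hp.le, one_div]

lemma bNorm_add_le (hα : -1 < α) (hp : 1 ≤ p) {f g : ℂ → ℂ} (hf : MemAp p α f) (hg : MemAp p α g) :
    bNorm p α (fun z => f z + g z) ≤ bNorm p α f + bNorm p α g := by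
  have hp0 : 0 < p := by linarith
  have h1 := hf.memLp hα hp0
  have h2 := hg.memLp hα hp0
  rw [bNorm_eq_lpNorm hα hp0 h1.1, bNorm_eq_lpNorm hα hp0 h2.1,
    bNorm_eq_lpNorm (f := fun z => f z + g z) hα hp0 (h1.add h2).1]
  exact lpNorm_add_le h1 (by simpa using hp)

lemma bNorm_const_mul (hα : -1 < α) (hp : 0 < p) (c : ℂ) (f : ℂ → ℂ) :
    bNorm p α (fun z => c * f z) = ‖c‖ * bNorm p α f := by
  rw [bNorm_eq hα, bNorm_eq hα]
  simp_rw [norm_mul, Real.mul_rpow (norm_nonneg _) (norm_nonneg _)]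
  rw [integral_const_mul, Real.mul_rpow (by positivity) (by positivity),
    ← Real.rpow_mul (norm_nonneg _), mul_one_div_cancel hp.ne', Real.rpow_one]

lemma MemAp.add (hα : -1 < α) (hp : 0 < p) {f g : ℂ → ℂ} (hf : MemAp p α f) (hg : MemAp p α g) :
    MemAp p α (fun z => f z + g z) :=
  memAp_of_memLp hα hp (hf.1.add hg.1) ((hf.memLp hα hp).add (hg.memLp hα hp))

lemma MemAp.const_mul (hα : -1 < α) (hp : 0 < p) {f : ℂ → ℂ} (hf : MemAp p α f) (c : ℂ) :
    MemAp p α (fun z => c * f z) :=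
  memAp_of_memLp hα hp (hf.1.const_mul c) ((hf.memLp hα hp).const_mul c)

lemma MemAp.sub (hα : -1 < α) (hp : 0 < p) {f g : ℂ → ℂ} (hf : MemAp p α f) (hg : MemAp p α g) :
    MemAp p α (fun z => f z - g z) :=
  memAp_of_memLp hα hp (hf.1.sub hg.1) ((hf.memLp hα hp).sub (hg.memLp hα hp))

lemma memAp_poly (hα : -1 < α) (hp : 0 < p) (P : Polynomial ℂ) :
    MemAp p α (fun z => P.eval z) := by
  have := isFiniteMeasure_bMeas hα
  refine memAp_of_memLp hα hp P.differentiable.differentiableOn ?_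
  obtain ⟨C, hC⟩ := (isCompact_closedBall (0:ℂ) 1).exists_bound_of_continuousOn
    (f := fun z => P.eval z) P.continuous.continuousOn
  exact MemLp.of_bound (aesm_of_continuousOn P.continuous.continuousOn) C
    (ae_bMeas_of_forall fun z hz => hC z (ball_subset_closedBall hz))

lemma MemAp.rot (hα : -1 < α) (hp : 0 < p) {f : ℂ → ℂ} (hf : MemAp p α f) {c : ℂ} (hc : ‖c‖ = 1) :
    MemAp p α (fun z => f (c * z)) :=
  memAp_of_memLp hα hp (hf.1.comp (by fun_prop) fun _ hz => (rot_mem hc).2 hz)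
    ((hf.memLp hα hp).comp_measurePreserving (measurePreserving_rot hc))

lemma rot_emb {c : ℂ} (hc : ‖c‖ = 1) : MeasurableEmbedding (fun z : ℂ => c * z) :=
  measurableEmbedding_mulLeft₀ (by rintro rfl; simp at hc)

lemma bNorm_rot (hα : -1 < α) (f : ℂ → ℂ) {c : ℂ} (hc : ‖c‖ = 1) :
    bNorm p α (fun z => f (c * z)) = bNorm p α f := by
  rw [bNorm_eq hα, bNorm_eq hα]
  congr 1
  exact (measurePreserving_rot hc).integral_comp (rot_emb hc) (fun z => ‖f z‖ ^ p)

/-- Moving a rotation from one side of the pairing to the other. -/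
lemma pairing_rot (hα : -1 < α) (f k : ℂ → ℂ) {c d : ℂ} (hc : ‖c‖ = 1) (hcd : c * d = 1) :
    pairing α (fun z => f (c * z)) k = pairing α f (fun z => k (d * z)) := by
  rw [pairing_eq hα, pairing_eq hα, ← (measurePreserving_rot (α := α) hc).integral_comp (rot_emb hc)
    (fun z => f z * (starRingEnd ℂ) (k (d * z)))]
  simp only [← mul_assoc, mul_comm d c, hcd, one_mul]

lemma pairing_integrable (hα : -1 < α) (hpq : p.HolderConjugate q) {f k : ℂ → ℂ}
    (hf : MemAp p α f) (hk : MemAp q α k) :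
    Integrable (fun z => f z * (starRingEnd ℂ) (k z)) (bMeas α) := by
  have : ENNReal.HolderConjugate (ENNReal.ofReal p) (ENNReal.ofReal q) := hpq.ennrealOfReal
  have h2 : MemLp (fun z => (starRingEnd ℂ) (k z)) (ENNReal.ofReal q) (bMeas α) :=
    (hk.memLp hα hpq.symm.pos).star
  exact (hf.memLp hα hpq.pos).integrable_mul h2

/-- Hölder's inequality. -/
lemma norm_pairing_le (hα : -1 < α) (hpq : p.HolderConjugate q) {f k : ℂ → ℂ}
    (hf : MemAp p α f) (hk : MemAp q α k) :
    ‖pairing α f k‖ ≤ bNorm p α f * bNorm q α k := by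
  rw [pairing_eq hα, bNorm_eq hα, bNorm_eq hα]
  refine (norm_integral_le_integral_norm _).trans ?_
  simp only [norm_mul, RCLike.norm_conj]
  exact integral_mul_norm_le_Lp_mul_Lq hpq (hf.memLp hα hpq.pos) (hk.memLp hα hpq.symm.pos)

lemma pairing_add (hα : -1 < α) (hpq : p.HolderConjugate q) {f g k : ℂ → ℂ}
    (hf : MemAp p α f) (hg : MemAp p α g) (hk : MemAp q α k) :
    pairing α (fun z => f z + g z) k = pairing α f k + pairing α g k := by
  simp only [pairing_eq hα, add_mul]
  exact integral_add (pairing_integrable hα hpq hf hk) (pairing_integrable hα hpq hg hk)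

lemma pairing_add_right (hα : -1 < α) (hpq : p.HolderConjugate q) {f k l : ℂ → ℂ}
    (hf : MemAp p α f) (hk : MemAp q α k) (hl : MemAp q α l) :
    pairing α f (fun z => k z + l z) = pairing α f k + pairing α f l := by
  simp only [pairing_eq hα, map_add, mul_add]
  exact integral_add (pairing_integrable hα hpq hf hk) (pairing_integrable hα hpq hf hl)

lemma pairing_const_mul (hα : -1 < α) (c : ℂ) (f k : ℂ → ℂ) :
    pairing α (fun z => c * f z) k = c * pairing α f k := by
  simp only [pairing_eq hα, mul_assoc]
  exact integral_const_mul _ _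

lemma pairing_const_mul_right (hα : -1 < α) (c : ℂ) (f k : ℂ → ℂ) :
    pairing α f (fun z => c * k z) = (starRingEnd ℂ) c * pairing α f k := by
  simp only [pairing_eq hα, map_mul]
  rw [← integral_const_mul]
  congr 1
  ext z
  ring

end Lp

/-! ### Uniform convexity and extremal functions -/

/-- Pointwise form of Clarkson's inequality for exponents at least `2`, from the parallelogram law,
superadditivity of `x ↦ x^{p/2}` and its convexity. -/
lemma clarkson_pointwise {p : ℝ} (hp : 2 ≤ p) (a b : ℂ) :
    ‖(1 / 2 : ℂ) * (a + b)‖ ^ p + ‖(1 / 2 : ℂ) * (a - b)‖ ^ p ≤ (‖a‖ ^ p + ‖b‖ ^ p) / 2 := by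
  have hr : 1 ≤ p / 2 := by linarith
  have hpow : ∀ x : ℝ, 0 ≤ x → x ^ p = (x ^ 2) ^ (p / 2) := by
    intro x hx
    rw [← Real.rpow_natCast, ← Real.rpow_mul hx]
    congr 1
    push_cast
    ring
  simp only [hpow _ (norm_nonneg _)]
  have h1 : (‖(1 / 2 : ℂ) * (a + b)‖ ^ 2) ^ (p / 2) + (‖(1 / 2 : ℂ) * (a - b)‖ ^ 2) ^ (p / 2)
      ≤ (‖(1 / 2 : ℂ) * (a + b)‖ ^ 2 + ‖(1 / 2 : ℂ) * (a - b)‖ ^ 2) ^ (p / 2) :=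
    Real.add_rpow_le_rpow_add (by positivity) (by positivity) hr
  have h2 : ‖(1 / 2 : ℂ) * (a + b)‖ ^ 2 + ‖(1 / 2 : ℂ) * (a - b)‖ ^ 2
      = 1 / 2 * ‖a‖ ^ 2 + 1 / 2 * ‖b‖ ^ 2 := by
    have := parallelogram_law_with_norm ℝ a b
    rw [norm_mul, norm_mul]
    norm_num
    nlinarith
  have h3 := (convexOn_rpow hr).2 (mem_Ici.2 (sq_nonneg ‖a‖)) (mem_Ici.2 (sq_nonneg ‖b‖))
    (by norm_num : (0:ℝ) ≤ 1 / 2) (by norm_num : (0:ℝ) ≤ 1 / 2) (by norm_num)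
  simp only [smul_eq_mul] at h3
  rw [h2] at h1
  linarith

/-- Clarkson's inequality in `A^p_α`, `p ≥ 2`. -/
lemma clarkson {α p : ℝ} (hα : -1 < α) (hp : 2 ≤ p) {f g : ℂ → ℂ}
    (hf : MemAp p α f) (hg : MemAp p α g) :
    bNorm p α (fun z => (1 / 2 : ℂ) * (f z + g z)) ^ p
      + bNorm p α (fun z => (1 / 2 : ℂ) * (f z - g z)) ^ p
      ≤ (bNorm p α f ^ p + bNorm p α g ^ p) / 2 := by
  have hp0 : 0 < p := by linarith
  have hi : ∀ {h : ℂ → ℂ}, MemAp p α h → Integrable (fun z => ‖h z‖ ^ p) (bMeas α) := by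
    intro h hh
    have := (hh.memLp hα hp0).integrable_norm_rpow (by simpa using hp0) ENNReal.ofReal_ne_top
    rwa [ENNReal.toReal_ofReal hp0.le] at this
  simp only [bNorm_rpow hα hp0]
  have i1 := hi ((hf.add hα hp0 hg).const_mul hα hp0 (1 / 2))
  have i2 := hi ((hf.sub hα hp0 hg).const_mul hα hp0 (1 / 2))
  rw [← integral_add i1 i2, ← integral_add (hi hf) (hi hg), ← integral_div]
  exact integral_mono (i1.add i2) (((hi hf).add (hi hg)).div_const 2)
    fun z => clarkson_pointwise hp _ _

section extremal

variable {p q α : ℝ} {k F : ℂ → ℂ}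

/-- The functional with kernel `k` has norm at most `1` when the extremal value is normalized
to `1`. -/
lemma re_pairing_le (hα : -1 < α) (hp : 0 < p) (hF : IsExtremalFor p α k F)
    (hnorm : pairing α F k = 1) {g : ℂ → ℂ} (hg : MemAp p α g) :
    (pairing α g k).re ≤ bNorm p α g := by
  refine le_of_forall_gt_imp_ge_of_dense fun r hr => ?_
  have hr0 : 0 < r := (bNorm_nonneg hα p g).trans_lt hr
  have h := hF.2.2 _ (hg.const_mul hα hp ((r⁻¹ : ℝ) : ℂ)) (by
    rw [bNorm_const_mul hα hp, Complex.norm_real, Real.norm_of_nonneg (by positivity),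
      inv_mul_le_iff₀ hr0]
    linarith)
  rw [pairing_const_mul hα, hnorm, Complex.re_ofReal_mul, Complex.one_re,
    inv_mul_le_iff₀ hr0] at h
  linarith

/-- Uniform convexity: a function of norm at most `1` that nearly maximizes the functional is
close to the extremal function. -/
lemma dist_extremal_le (hα : -1 < α) (hpq : p.HolderConjugate q) (hp : 2 ≤ p) (hk : MemAp q α k)
    (hF : IsExtremalFor p α k F) (hnorm : pairing α F k = 1) {G : ℂ → ℂ} (hG : MemAp p α G)
    (hG1 : bNorm p α G ≤ 1) {η : ℝ} (hη : 0 ≤ η) (h : 1 - 2 * η ≤ (pairing α G k).re) :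
    bNorm p α (fun z => F z - G z) ≤ 2 * (p * η) ^ (1 / p) := by
  have hp0 : 0 < p := by linarith
  have hc := clarkson hα hp hF.1 hG
  have hlow : 1 - η ≤ bNorm p α (fun z => (1 / 2 : ℂ) * (F z + G z)) := by
    refine le_trans ?_ (re_pairing_le hα hp0 hF hnorm
      ((hF.1.add hα hp0 hG).const_mul hα hp0 (1 / 2)))
    rw [pairing_const_mul hα, pairing_add hα hpq hF.1 hG hk, hnorm,
      show (1 / 2 : ℂ) = ((1 / 2 : ℝ) : ℂ) by norm_num, Complex.re_ofReal_mul, Complex.add_re,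
      Complex.one_re]
    linarith
  have hG1' : bNorm p α G ^ p ≤ 1 := Real.rpow_le_one (bNorm_nonneg hα p G) hG1 hp0.le
  rw [hF.2.1, Real.one_rpow] at hc
  have hbern : 1 - p * η ≤ bNorm p α (fun z => (1 / 2 : ℂ) * (F z + G z)) ^ p := by
    rcases le_or_gt η 1 with h1 | h1
    · -- Bernoulli's inequality.
      have := one_add_mul_self_le_rpow_one_add (s := -η) (by linarith) (p := p) (by linarith)
      refine le_trans (by linarith) (this.trans (Real.rpow_le_rpow (by linarith) ?_ hp0.le))
      linarith
    · refine le_trans ?_ (Real.rpow_nonneg (bNorm_nonneg hα _ _) _)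
      nlinarith
  have hD : bNorm p α (fun z => (1 / 2 : ℂ) * (F z - G z)) ≤ (p * η) ^ (1 / p) := by
    rw [one_div p, Real.le_rpow_inv_iff_of_pos (bNorm_nonneg hα _ _) (by positivity) hp0]
    linarith
  rw [bNorm_const_mul hα hp0] at hD
  norm_num at hD ⊢
  linarith

/-- A bound `B` for a second difference of `k` gives a bound of order `B^{1/p}` for the second
difference of `F`: the average of the two rotations of `F` has norm at most `1`, and moving the
rotations over to `k` shows that it nearly maximizes the functional. -/
lemma extremal_smooth (hα : -1 < α) (hpq : p.HolderConjugate q) (hp : 2 ≤ p) (hk : MemAp q α k)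
    (hF : IsExtremalFor p α k F) (hnorm : pairing α F k = 1) {t B : ℝ}
    (hB : bNorm q α (fun z => k (Complex.exp (t * Complex.I) * z)
          + k (Complex.exp (-t * Complex.I) * z) - 2 * k z) ≤ B) :
    bNorm p α (fun z => F (Complex.exp (t * Complex.I) * z)
          + F (Complex.exp (-t * Complex.I) * z) - 2 * F z) ≤ 4 * (p * (B / 4)) ^ (1 / p) := by
  have hp0 : 0 < p := by linarith
  have hq0 : 0 < q := hpq.symm.pos
  set c := Complex.exp (t * Complex.I) with hc
  set d := Complex.exp (-t * Complex.I) with hd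
  have hc1 : ‖c‖ = 1 := Complex.norm_exp_ofReal_mul_I t
  have hd1 : ‖d‖ = 1 := by
    have := Complex.norm_exp_ofReal_mul_I (-t)
    rwa [Complex.ofReal_neg] at this
  have hcd : c * d = 1 := by
    rw [hc, hd, ← Complex.exp_add]
    simp
  have hdc : d * c = 1 := by rw [mul_comm, hcd]
  have hFc := hF.1.rot hα hp0 hc1
  have hFd := hF.1.rot hα hp0 hd1
  have hkc := hk.rot hα hq0 hc1
  have hkd := hk.rot hα hq0 hd1
  have hk2 : MemAp q α (fun z => (-2 : ℂ) * k z) := hk.const_mul hα hq0 _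
  have hB0 : 0 ≤ B := (bNorm_nonneg hα _ _).trans hB
  have hG := (hFc.add hα hp0 hFd).const_mul hα hp0 (1 / 2)
  have hG1 : bNorm p α (fun z => (1 / 2 : ℂ) * (F (c * z) + F (d * z))) ≤ 1 := by
    rw [bNorm_const_mul hα hp0]
    have := bNorm_add_le hα (by linarith) hFc hFd
    rw [bNorm_rot hα F hc1, bNorm_rot hα F hd1, hF.2.1] at this
    norm_num
    linarith
  have hpk : pairing α F (fun z => k (c * z) + k (d * z) + (-2 : ℂ) * k z)
      = pairing α F (fun z => k (c * z)) + pairing α F (fun z => k (d * z)) - 2 := by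
    rw [pairing_add_right hα hpq hF.1 (hkc.add hα hq0 hkd) hk2,
      pairing_add_right hα hpq hF.1 hkc hkd, pairing_const_mul_right hα, hnorm,
      map_neg, map_ofNat]
    ring
  have hpG : pairing α (fun z => (1 / 2 : ℂ) * (F (c * z) + F (d * z))) k
      = 1 + (1 / 2 : ℝ) * pairing α F (fun z => k (c * z) + k (d * z) + (-2 : ℂ) * k z) := by
    rw [hpk, pairing_const_mul hα, pairing_add hα hpq hFc hFd hk, pairing_rot hα F k hc1 hcd,
      pairing_rot hα F k hd1 hdc]
    push_cast
    ring
  have hlow : 1 - 2 * (B / 4)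
      ≤ (pairing α (fun z => (1 / 2 : ℂ) * (F (c * z) + F (d * z))) k).re := by
    have h1 := norm_pairing_le hα hpq hF.1 ((hkc.add hα hq0 hkd).add hα hq0 hk2)
    rw [hF.2.1, one_mul] at h1
    have h2 : bNorm q α (fun z => k (c * z) + k (d * z) + (-2 : ℂ) * k z) ≤ B := by
      refine le_of_eq_of_le (bNorm_congr fun z _ => ?_) hB
      ring
    have h3 := (abs_le.1 (Complex.abs_re_le_norm
      (pairing α F (fun z => k (c * z) + k (d * z) + (-2 : ℂ) * k z)))).1
    rw [hpG, Complex.add_re, Complex.re_ofReal_mul, Complex.one_re]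
    linarith
  have := dist_extremal_le hα hpq hp hk hF hnorm hG hG1 (by positivity) hlow
  have he : bNorm p α (fun z => F (c * z) + F (d * z) - 2 * F z)
      = bNorm p α (fun z => (-2 : ℂ) * (F z - (1 / 2 : ℂ) * (F (c * z) + F (d * z)))) :=
    bNorm_congr fun z _ => by ring
  rw [he, bNorm_const_mul hα hp0]
  norm_num at this ⊢
  linarith

/-- Any polynomial of degree at most `n` within `δ` of `F` forces `F_n`, whose functional value is
at least `(1 - δ) / (1 + δ) ≥ 1 - 2δ`, to be close to `F`. -/
lemma dist_extremalPoly_le (hα : -1 < α) (hpq : p.HolderConjugate q) (hp : 2 ≤ p)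
    (hk : MemAp q α k) (hF : IsExtremalFor p α k F) (hnorm : pairing α F k = 1) {n : ℕ}
    {Fn : Polynomial ℂ} (hFn : IsExtremalPolyFor p α k n Fn) {P : Polynomial ℂ}
    (hP : P.natDegree ≤ n) {δ : ℝ} (hδ : bNorm p α (fun z => F z - P.eval z) ≤ δ) :
    bNorm p α (fun z => F z - Fn.eval z) ≤ 2 * (p * δ) ^ (1 / p) := by
  have hp0 : 0 < p := by linarith
  have hδ0 : 0 ≤ δ := (bNorm_nonneg hα _ _).trans hδ
  have hPm := memAp_poly hα hp0 P
  have hFP := hF.1.sub hα hp0 hPm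
  have hPn : bNorm p α (fun z => P.eval z) ≤ 1 + δ := by
    have h1 := bNorm_add_le hα (by linarith) hF.1 (hFP.const_mul hα hp0 (-1))
    rw [bNorm_const_mul hα hp0, hF.2.1] at h1
    simp only [norm_neg, norm_one, one_mul] at h1
    refine le_of_eq_of_le (bNorm_congr fun z _ => ?_) (h1.trans (by linarith))
    ring
  have hPp : 1 - δ ≤ (pairing α (fun z => P.eval z) k).re := by
    have h1 : pairing α (fun z => P.eval z + (F z - P.eval z)) k = 1 := by
      rw [← hnorm]; congr 1; ext z; ring
    rw [pairing_add hα hpq hPm hFP hk] at h1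
    have h2 := congrArg Complex.re h1
    rw [Complex.add_re, Complex.one_re] at h2
    linarith [re_pairing_le hα hp0 hF hnorm hFP]
  have hs : 0 < 1 + δ := by linarith
  refine dist_extremal_le hα hpq hp hk hF hnorm (memAp_poly hα hp0 Fn) hFn.2.1.le hδ0 ?_
  have h3 := hFn.2.2 (Polynomial.C (((1 + δ)⁻¹ : ℝ) : ℂ) * P)
    ((Polynomial.natDegree_C_mul_le _ _).trans hP)
  simp only [Polynomial.eval_mul, Polynomial.eval_C] at h3
  rw [bNorm_const_mul hα hp0, Complex.norm_real, Real.norm_of_nonneg (by positivity),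
    pairing_const_mul hα, Complex.re_ofReal_mul, inv_mul_le_iff₀ hs] at h3
  refine le_trans ?_ (h3 (by linarith))
  rw [← div_eq_inv_mul, le_div_iff₀ hs]
  nlinarith

end extremal

/-! ### Approximation by polynomials -/

/-- A form of Minkowski's integral inequality: integrating over a parameter increases `L^p`
bounds by at most the mass of the parameter measure. -/
lemma lintegral_rpow_lintegral_le {p : ℝ} (hp : 1 < p) {ν : Measure ℝ} {μ : Measure ℂ}
    [SFinite ν] [SFinite μ] {H : ℝ → ℂ → ENNReal} (hH : Measurable (Function.uncurry H))
    {K : ENNReal} (hK : ∀ᵐ s ∂ν, ∫⁻ z, H s z ^ p ∂μ ≤ K) :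
    ∫⁻ z, (∫⁻ s, H s z ∂ν) ^ p ∂μ ≤ ν univ ^ p * K := by
  have hp0 : 0 < p := by linarith
  have hpq := Real.HolderConjugate.conjExponent hp
  set q := p.conjExponent with hq
  have hz : ∀ z, Measurable fun s => H s z := fun z =>
    hH.comp (measurable_id.prodMk measurable_const)
  have h1 : ∀ z, (∫⁻ s, H s z ∂ν) ^ p ≤ (∫⁻ s, H s z ^ p ∂ν) * ν univ ^ (p - 1) := by
    intro z
    have h := ENNReal.lintegral_mul_le_Lp_mul_Lq ν hpq (hz z).aemeasurable
      (aemeasurable_const (b := (1 : ENNReal)))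
    simp only [Pi.mul_apply, mul_one, ENNReal.one_rpow, lintegral_const, one_mul] at h
    refine (ENNReal.rpow_le_rpow h hp0.le).trans_eq ?_
    rw [ENNReal.mul_rpow_of_nonneg _ _ hp0.le, ← ENNReal.rpow_mul, ← ENNReal.rpow_mul,
      one_div_mul_cancel hp0.ne', ENNReal.rpow_one]
    congr 2
    have := hpq.symm.ne_zero
    have := hpq.sub_one_mul_conj
    field_simp
    linarith
  calc ∫⁻ z, (∫⁻ s, H s z ∂ν) ^ p ∂μ
      ≤ ∫⁻ z, (∫⁻ s, H s z ^ p ∂ν) * ν univ ^ (p - 1) ∂μ := lintegral_mono h1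
    _ = (∫⁻ z, ∫⁻ s, H s z ^ p ∂ν ∂μ) * ν univ ^ (p - 1) := by
        refine lintegral_mul_const _ (Measurable.lintegral_prod_left ?_)
        exact hH.pow_const p
    _ = (∫⁻ s, ∫⁻ z, H s z ^ p ∂μ ∂ν) * ν univ ^ (p - 1) := by
        rw [lintegral_lintegral_swap]
        exact ((hH.pow_const p).comp measurable_swap).aemeasurable
    _ ≤ (∫⁻ _, K ∂ν) * ν univ ^ (p - 1) := by gcongr ?_ * _; exact lintegral_mono_ae hK
    _ = ν univ ^ p * K := by
        rw [lintegral_const, mul_assoc, mul_comm]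
        congr 1
        have : ν univ ^ p = ν univ ^ (1 + (p - 1)) := by congr 1; ring
        rw [this, ENNReal.rpow_add_of_nonneg _ _ zero_le_one (by linarith), ENNReal.rpow_one]

/-- The second symmetric difference of `f` in the angular variable, with step `s`. -/
def symmDiff2 (f : ℂ → ℂ) (s : ℝ) (z : ℂ) : ℂ :=
  f (Complex.exp (s * Complex.I) * z) + f (Complex.exp (-s * Complex.I) * z) - 2 * f z

/-- The `j`-th Taylor coefficient at the origin. -/
def taylorCoef (f : ℂ → ℂ) (j : ℕ) : ℂ := ((j.factorial : ℂ))⁻¹ * iteratedDeriv j f 0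

lemma hasSum_taylorCoef {f : ℂ → ℂ} (hf : DifferentiableOn ℂ f unitDisc) {z : ℂ}
    (hz : z ∈ unitDisc) : HasSum (fun j => taylorCoef f j * z ^ j) (f z) := by
  have := Complex.hasSum_taylorSeries_on_ball (c := 0) (r := 1) hf hz
  refine this.congr_fun ?_
  intro j
  simp only [taylorCoef, smul_eq_mul, sub_zero]
  ring

/-- The second symmetric difference multiplies the `j`-th Taylor coefficient by `2 cos(js) - 2`. -/
lemma hasSum_symmDiff2 {f : ℂ → ℂ} (hf : DifferentiableOn ℂ f unitDisc) {z : ℂ}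
    (hz : z ∈ unitDisc) (s : ℝ) :
    HasSum (fun j : ℕ => taylorCoef f j * z ^ j * (2 * Real.cos (j * s) - 2 : ℝ))
      (symmDiff2 f s z) := by
  have hd : ‖Complex.exp (-s * Complex.I)‖ = 1 := by
    have := Complex.norm_exp_ofReal_mul_I (-s)
    rwa [Complex.ofReal_neg] at this
  have h1 := hasSum_taylorCoef hf ((rot_mem (Complex.norm_exp_ofReal_mul_I s)).2 hz)
  have h2 := hasSum_taylorCoef hf ((rot_mem hd).2 hz)
  have h3 := (hasSum_taylorCoef hf hz).mul_left 2
  refine ((h1.add h2).sub h3).congr_fun fun j => ?_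
  have : (2 * Real.cos (j * s) - 2 : ℝ) = (Complex.exp (s * Complex.I)) ^ j
      + (Complex.exp (-s * Complex.I)) ^ j - (2:ℂ) := by
    push_cast
    rw [Complex.two_cos, ← Complex.exp_nat_mul, ← Complex.exp_nat_mul]
    congr 3 <;> ring_nf
  rw [this, mul_pow, mul_pow]
  ring

/-- The multiplier at frequency `j` of the de la Vallée Poussin mean with kernel `vpKer n`; the
factor `4 / (π n)` makes it `1` at `j = 0`. -/
def vpMult (n j : ℕ) : ℝ := 4 / (Real.pi * n) * ∫ x in Ioi (0:ℝ), Real.cos (j * x) * vpKer n x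

/-- The de la Vallée Poussin mean of `f`. The multipliers vanish for `j ≥ n`, so summing over
`j < n` loses nothing. -/
def vpPoly (f : ℂ → ℂ) (n : ℕ) : Polynomial ℂ :=
  ∑ j ∈ Finset.range n, Polynomial.C (taylorCoef f j * vpMult n j) * Polynomial.X ^ j

lemma vpPoly_natDegree_le (f : ℂ → ℂ) (n : ℕ) : (vpPoly f n).natDegree ≤ n :=
  Polynomial.natDegree_sum_le_of_forall_le _ _ fun _ hj =>
    (Polynomial.natDegree_C_mul_X_pow_le _ _).trans (Finset.mem_range.1 hj).le

lemma vpKer_cos_integrable (n j : ℕ) :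
    IntegrableOn (fun x => (2 * Real.cos (j * x) - 2) * vpKer n x) (Ioi 0) := by
  refine (vpKer_integrable n).bdd_mul (c := 4) (by fun_prop) ?_
  refine Filter.Eventually.of_forall fun x => ?_
  rw [Real.norm_eq_abs, abs_le]
  constructor <;> linarith [Real.cos_le_one (j * x), Real.neg_one_le_cos (j * x)]

lemma vpKer_cos_integral_eq {n : ℕ} (hn : 1 ≤ n) (j : ℕ) :
    ∫ x in Ioi (0:ℝ), (2 * Real.cos (j * x) - 2) * vpKer n x
      = Real.pi * n / 2 * (vpMult n j - 1) := by
  have hn0 : (0:ℝ) < n := by exact_mod_cast hn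
  have hi : IntegrableOn (fun x => Real.cos (j * x) * vpKer n x) (Ioi 0) := by
    refine (vpKer_integrable n).bdd_mul (c := 1) (by fun_prop) ?_
    exact Filter.Eventually.of_forall fun x => Real.abs_cos_le_one (j * x)
  have : ∀ x, (2 * Real.cos (j * x) - 2) * vpKer n x
      = 2 * (Real.cos (j * x) * vpKer n x) - 2 * vpKer n x := fun x => by ring
  simp_rw [this]
  rw [integral_sub (hi.const_mul 2) ((vpKer_integrable n).const_mul 2), integral_const_mul,
    integral_const_mul, vpKer_integral, vpMult]
  have := Real.pi_pos
  field_simp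
  ring

/-- Integrating second symmetric differences against the kernel gives the error of `vpPoly`. The
Taylor series may be integrated term by term because the kernel is integrable. -/
lemma integral_symmDiff2 {f : ℂ → ℂ} (hf : DifferentiableOn ℂ f unitDisc) {n : ℕ} (hn : 1 ≤ n)
    {z : ℂ} (hz : z ∈ unitDisc) :
    ∫ s in Ioi (0:ℝ), symmDiff2 f s z * vpKer n s
      = (Real.pi * n / 2 : ℝ) * ((vpPoly f n).eval z - f z) := by
  have hn0 : (0:ℝ) < n := by exact_mod_cast hn
  have hsum := hasSum_taylorCoef hf hz
  set a : ℕ → ℂ := fun j => taylorCoef f j * z ^ j with ha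
  have hint : ∀ j : ℕ, ∫ s in Ioi (0:ℝ), a j * (((2 * Real.cos (j * s) - 2) * vpKer n s : ℝ) : ℂ)
      = (Real.pi * n / 2 : ℝ) * (a j * vpMult n j - a j) := by
    intro j
    rw [integral_const_mul, integral_complex_ofReal, vpKer_cos_integral_eq hn]
    push_cast
    ring
  have hbd : ∀ j : ℕ, ∫ s in Ioi (0:ℝ), ‖a j * (((2 * Real.cos (j * s) - 2) * vpKer n s : ℝ) : ℂ)‖
      ≤ ‖a j‖ * (4 * ∫ s in Ioi (0:ℝ), ‖vpKer n s‖) := by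
    intro j
    simp_rw [norm_mul]
    rw [integral_const_mul ‖a j‖, ← integral_const_mul (4:ℝ)]
    refine mul_le_mul_of_nonneg_left ?_ (norm_nonneg (a j))
    refine integral_mono ?_ ((vpKer_integrable n).norm.const_mul 4) fun s => ?_
    · exact (vpKer_cos_integrable n j).ofReal.norm
    · simp only [Complex.norm_real, norm_mul]
      refine mul_le_mul_of_nonneg_right ?_ (norm_nonneg _)
      rw [Real.norm_eq_abs, abs_le]
      constructor <;> linarith [Real.cos_le_one (j * s), Real.neg_one_le_cos (j * s)]
  have key := hasSum_integral_of_summable_integral_norm (μ := volume.restrict (Ioi (0:ℝ)))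
    (F := fun (j : ℕ) (s : ℝ) => a j * (((2 * Real.cos (j * s) - 2) * vpKer n s : ℝ) : ℂ))
    (fun j => (vpKer_cos_integrable n j).ofReal.const_mul _)
    (Summable.of_nonneg_of_le (fun j => by positivity) hbd (hsum.summable.norm.mul_right _))
  simp_rw [hint] at key
  have hts : ∀ s : ℝ, ∑' j : ℕ, a j * (((2 * Real.cos (j * s) - 2) * vpKer n s : ℝ) : ℂ)
      = symmDiff2 f s z * vpKer n s := by
    intro s
    refine HasSum.tsum_eq ?_
    refine ((hasSum_symmDiff2 hf hz s).mul_right (vpKer n s : ℂ)).congr_fun fun j => ?_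
    simp only [ha]
    push_cast
    ring
  simp_rw [hts] at key
  refine key.unique ?_
  refine HasSum.mul_left _ (HasSum.sub ?_ hsum)
  have he : (vpPoly f n).eval z = ∑ j ∈ Finset.range n, a j * vpMult n j := by
    rw [vpPoly, Polynomial.eval_finsetSum]
    refine Finset.sum_congr rfl fun j _ => ?_
    simp only [ha, Polynomial.eval_mul, Polynomial.eval_C, Polynomial.eval_pow, Polynomial.eval_X]
    ring
  rw [he]
  refine hasSum_sum_of_ne_finset_zero fun j hj => ?_
  rw [vpMult, vpKer_cos_integral_eq_zero (by simpa using hj)]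
  simp

set_option maxHeartbeats 800000 in
/-- Jackson-type theorem: smoothness of order `γ` gives polynomial approximation of order
`n^{-γ}`. The error of `vpPoly` is bounded by `lintegral_rpow_lintegral_le` for the measure with
density `s^γ |vpKer n s|`, whose mass is computed in `vpKer_moment`. -/
lemma exists_poly_approx {p α γ C : ℝ} (hα : -1 < α) (hp : 1 < p) (h0 : 0 < γ) (h1 : γ < 1)
    (hC : 0 ≤ C) {n : ℕ} (hn : 1 ≤ n) {f : ℂ → ℂ} (hf : MemAp p α f)
    (hs : ∀ s : ℝ, 0 < s → bNorm p α (symmDiff2 f s) ≤ C * s ^ γ) :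
    ∃ P : Polynomial ℂ, P.natDegree ≤ n ∧
      bNorm p α (fun z => f z - P.eval z) ≤ 1 / 2 * (Acoef γ * (n:ℝ) ^ (-γ)) * C := by
  have hp0 : 0 < p := by linarith
  have hn0 : (0:ℝ) < n := by exact_mod_cast hn
  have hpi := Real.pi_pos
  have := isFiniteMeasure_bMeas hα
  obtain ⟨hmi, hmv⟩ := vpKer_moment h0 h1 hn
  refine ⟨vpPoly f n, vpPoly_natDegree_le f n, ?_⟩
  -- Extending `f` by zero off the disc makes all functions below jointly Borel measurable.
  set g : ℂ → ℂ := unitDisc.indicator f with hg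
  have hgm : Measurable g := by
    classical
    rw [hg, ← Set.piecewise_eq_indicator]
    exact ContinuousOn.measurable_piecewise hf.1.continuousOn continuousOn_const
      measurableSet_unitDisc
  have hgf : ∀ s : ℝ, ∀ z ∈ unitDisc, symmDiff2 g s z = symmDiff2 f s z := by
    intro s z hz
    have hd : ‖Complex.exp (-s * Complex.I)‖ = 1 := by
      have := Complex.norm_exp_ofReal_mul_I (-s)
      rwa [Complex.ofReal_neg] at this
    simp only [symmDiff2, hg]
    rw [Set.indicator_of_mem ((rot_mem (Complex.norm_exp_ofReal_mul_I s)).2 hz),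
      Set.indicator_of_mem ((rot_mem hd).2 hz), Set.indicator_of_mem hz]
  have hDm : Measurable (Function.uncurry (symmDiff2 g)) := by
    unfold symmDiff2 Function.uncurry
    fun_prop
  set ρ : ℝ → ENNReal := fun s => ENNReal.ofReal (s ^ γ * |vpKer n s|) with hρ
  have hvm : Measurable (vpKer n) := by unfold vpKer; fun_prop
  have hρm : Measurable ρ := by
    simp only [hρ]
    fun_prop
  set ν : Measure ℝ := (volume.restrict (Ioi 0)).withDensity ρ with hν
  set J : ℝ := ∫ s in Ioi (0:ℝ), s ^ γ * |vpKer n s| with hJ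
  have hJ0 : 0 ≤ J := setIntegral_nonneg measurableSet_Ioi fun s hs => by
    have : 0 < s := hs
    positivity
  have hνu : ν univ = ENNReal.ofReal J := by
    rw [hν, withDensity_apply _ MeasurableSet.univ, Measure.restrict_univ, hJ,
      ofReal_integral_eq_lintegral_ofReal hmi]
    exact (ae_restrict_iff' measurableSet_Ioi).2 (Filter.Eventually.of_forall fun s hs => by
      have : 0 < s := hs
      positivity)
  set H : ℝ → ℂ → ENNReal := fun s z => ‖symmDiff2 g s z‖ₑ * (ENNReal.ofReal (s ^ γ))⁻¹ with hH
  have hHm : Measurable (Function.uncurry H) := by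
    have h1 : Measurable fun x : ℝ × ℂ => ‖Function.uncurry (symmDiff2 g) x‖ₑ := hDm.enorm
    have h2 : Measurable fun x : ℝ × ℂ => (ENNReal.ofReal (x.1 ^ γ))⁻¹ := by fun_prop
    exact h1.mul h2
  have hae : ∀ᵐ s ∂ν, (0:ℝ) < s :=
    (withDensity_absolutelyContinuous _ _) (ae_restrict_mem measurableSet_Ioi)
  have hlint : ∀ {u : ℂ → ℂ}, MemAp p α u →
      ∫⁻ z, ‖u z‖ₑ ^ p ∂(bMeas α) = ENNReal.ofReal (bNorm p α u ^ p) := by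
    intro u hu
    have hi := (hu.memLp hα hp0).integrable_norm_rpow (by simpa using hp0) ENNReal.ofReal_ne_top
    rw [ENNReal.toReal_ofReal hp0.le] at hi
    rw [bNorm_rpow hα hp0, ofReal_integral_eq_lintegral_ofReal hi
      (Filter.Eventually.of_forall fun z => by positivity)]
    refine lintegral_congr fun z => ?_
    rw [← ofReal_norm, ENNReal.ofReal_rpow_of_nonneg (norm_nonneg _) hp0.le]
  have hΔ : ∀ s : ℝ, MemAp p α (symmDiff2 f s) := by
    intro s
    have hd : ‖Complex.exp (-s * Complex.I)‖ = 1 := by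
      have := Complex.norm_exp_ofReal_mul_I (-s)
      rwa [Complex.ofReal_neg] at this
    exact ((hf.rot hα hp0 (Complex.norm_exp_ofReal_mul_I s)).add hα hp0
      (hf.rot hα hp0 hd)).sub hα hp0 (hf.const_mul hα hp0 2)
  have hK : ∀ᵐ s ∂ν, ∫⁻ z, H s z ^ p ∂(bMeas α) ≤ ENNReal.ofReal (C ^ p) := by
    filter_upwards [hae] with s hs0
    have hsγ : 0 < s ^ γ := Real.rpow_pos_of_pos hs0 γ
    have e1 : ∫⁻ z, H s z ^ p ∂(bMeas α)
        = ∫⁻ z, ENNReal.ofReal (((s ^ γ)⁻¹) ^ p) * ‖symmDiff2 f s z‖ₑ ^ p ∂(bMeas α) := by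
      refine lintegral_congr_ae (ae_bMeas_of_forall fun z hz => ?_)
      simp only [hH]
      rw [hgf s z hz, ENNReal.mul_rpow_of_nonneg _ _ hp0.le, mul_comm,
        ← ENNReal.ofReal_inv_of_pos hsγ, ENNReal.ofReal_rpow_of_nonneg (by positivity) hp0.le]
    rw [e1, lintegral_const_mul' _ _ ENNReal.ofReal_ne_top, hlint (hΔ s),
      ← ENNReal.ofReal_mul (by positivity), ← Real.mul_rpow (by positivity) (bNorm_nonneg hα _ _)]
    refine ENNReal.ofReal_le_ofReal (Real.rpow_le_rpow
      (mul_nonneg (by positivity) (bNorm_nonneg hα _ _)) ?_ hp0.le)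
    rw [inv_mul_le_iff₀ hsγ, mul_comm]
    exact hs s hs0
  have hmain := lintegral_rpow_lintegral_le hp hHm hK
  rw [hνu] at hmain
  have hpt : ∀ z ∈ unitDisc, ‖(Real.pi * n / 2 : ℝ) * (f z - (vpPoly f n).eval z)‖ₑ
      ≤ ∫⁻ s, H s z ∂ν := by
    intro z hz
    have e1 : ((Real.pi * n / 2 : ℝ) : ℂ) * (f z - (vpPoly f n).eval z)
        = -∫ s in Ioi (0:ℝ), symmDiff2 f s z * vpKer n s := by
      rw [integral_symmDiff2 hf.1 hn hz]
      ring
    rw [e1, enorm_neg]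
    refine (enorm_integral_le_lintegral_enorm _).trans_eq ?_
    have hz1 : Measurable fun s => H s z := hHm.of_uncurry_right
    rw [hν, lintegral_withDensity_eq_lintegral_mul _ hρm hz1]
    refine setLIntegral_congr_fun measurableSet_Ioi fun s hs0 => ?_
    have hsγ : 0 < s ^ γ := Real.rpow_pos_of_pos hs0 γ
    simp only [Pi.mul_apply, hρ, hH]
    rw [hgf s z hz, ENNReal.ofReal_mul hsγ.le, enorm_mul, ← ofReal_norm (vpKer n s : ℂ),
      Complex.norm_real, Real.norm_eq_abs]
    have e2 : ENNReal.ofReal (s ^ γ) * (ENNReal.ofReal (s ^ γ))⁻¹ = 1 :=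
      ENNReal.mul_inv_cancel (by simpa using hsγ) ENNReal.ofReal_ne_top
    calc _ = (ENNReal.ofReal (s ^ γ) * (ENNReal.ofReal (s ^ γ))⁻¹)
          * (‖symmDiff2 f s z‖ₑ * ENNReal.ofReal |vpKer n s|) := by rw [e2, one_mul]
      _ = _ := by ring
  have hm := (hf.sub hα hp0 (memAp_poly hα hp0 (vpPoly f n))).const_mul hα hp0
    ((Real.pi * n / 2 : ℝ) : ℂ)
  have hfin : ENNReal.ofReal (bNorm p α (fun z => ((Real.pi * n / 2 : ℝ) : ℂ) *
      (f z - (vpPoly f n).eval z)) ^ p) ≤ ENNReal.ofReal ((J * C) ^ p) := by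
    rw [← hlint hm, Real.mul_rpow hJ0 hC, ENNReal.ofReal_mul (by positivity),
      ← ENNReal.ofReal_rpow_of_nonneg hJ0 hp0.le]
    refine le_trans (lintegral_mono_ae (ae_bMeas_of_forall fun z hz => ?_)) hmain
    exact ENNReal.rpow_le_rpow (hpt z hz) hp0.le
  rw [ENNReal.ofReal_le_ofReal_iff (by positivity),
    Real.rpow_le_rpow_iff (bNorm_nonneg hα _ _) (by positivity) hp0, bNorm_const_mul hα hp0,
    Complex.norm_real, Real.norm_of_nonneg (by positivity)] at hfin
  rw [← hmv]
  have : 0 < Real.pi * n / 2 := by positivity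
  rw [← le_div_iff₀' this] at hfin
  refine hfin.trans_eq ?_
  field_simp
  ring

lemma Acoef_nonneg (γ : ℝ) : 0 ≤ Acoef γ := by
  have := Real.pi_pos
  refine mul_nonneg (by positivity) (setIntegral_nonneg measurableSet_Ioi fun t ht => ?_)
  have : 0 < t := ht
  positivity

/-! ### The rate of convergence -/

/-- Rate of convergence of the degree-`n` extremal polynomials to the extremal
function in `A^p_α`, for `2 < p < ∞` and a kernel `k ∈ Λ*_{β,A^q_α}`:
`‖F - F_n‖_{p,α} ≤ 2^{1+1/p-1/p²} p^{1/p+1/p²} A_{β/p}^{1/p} M^{1/p²} n^{-β/p²}`. -/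
theorem extremal_poly_rate_p_gt_two
    (p q α β : ℝ) (hp : 2 < p) (hq : 1/p + 1/q = 1) (hα : -1 < α)
    (hβ0 : 0 < β) (hβ2 : β ≤ 2)
    (k : ℂ → ℂ) (hk : MemAp q α k) (hkne : ∃ z ∈ unitDisc, k z ≠ 0)
    (M : ℝ)
    (hM : ∀ t : ℝ, bNorm q α (fun z =>
        k (Complex.exp (t * Complex.I) * z)
          + k (Complex.exp (-t * Complex.I) * z) - 2 * k z) ≤ M * |t| ^ β)
    (F : ℂ → ℂ) (hF : IsExtremalFor p α k F) (hnorm : pairing α F k = 1)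
    (n : ℕ) (hn : 1 ≤ n) (Fn : Polynomial ℂ) (hFn : IsExtremalPolyFor p α k n Fn) :
    bNorm p α (fun z => F z - Fn.eval z)
      ≤ 2 ^ (1 + 1/p - 1/p^2) * p ^ (1/p + 1/p^2) * Acoef (β/p) ^ (1/p)
          * M ^ (1/p^2) * (n : ℝ) ^ (-β/p^2) := by
  have hp0 : 0 < p := by linarith
  have hpq : p.HolderConjugate q := by
    rw [Real.holderConjugate_iff]
    exact ⟨by linarith, by simpa only [one_div] using hq⟩
  have hM0 : 0 ≤ M := by
    have := (bNorm_nonneg hα q _).trans (hM 1)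
    simpa using this
  have hn0 : (0:ℝ) < n := by exact_mod_cast hn
  have hA := Acoef_nonneg (β / p)
  set A := Acoef (β / p) with hAdef
  have hs : ∀ s : ℝ, 0 < s →
      bNorm p α (symmDiff2 F s) ≤ 4 * (p * M / 4) ^ (1 / p) * s ^ (β / p) := by
    intro s hs0
    refine (extremal_smooth hα hpq hp.le hk hF hnorm (hM s)).trans_eq ?_
    rw [abs_of_pos hs0, show p * (M * s ^ β / 4) = p * M / 4 * s ^ β by ring,
      Real.mul_rpow (by positivity) (by positivity), ← Real.rpow_mul hs0.le, mul_assoc,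
      mul_one_div]
  obtain ⟨P, hPn, hP⟩ := exists_poly_approx hα (by linarith) (by positivity)
    ((div_lt_one hp0).2 (by linarith)) (by positivity) hn hF.1 hs
  refine (dist_extremalPoly_le hα hpq hp.le hk hF hnorm hFn hPn hP).trans ?_
  rw [← hAdef]
  -- The exponent of `2` obtained is `1 + 1/p - 2/p²`, slightly better than required.
  have e4 : (4:ℝ) ^ (1 / p) = 2 ^ (2 / p) := by
    rw [show (4:ℝ) = 2 ^ (2:ℝ) by norm_num, ← Real.rpow_mul (by norm_num)]
    congr 1
    ring
  have e1 : p * (1 / 2 * (A * (n:ℝ) ^ (-(β / p))) * (4 * (p * M / 4) ^ (1 / p)))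
      = 2 ^ (1 - 2 / p) * p ^ (1 + 1 / p) * A * M ^ (1 / p) * (n:ℝ) ^ (-(β / p)) := by
    rw [Real.div_rpow (by positivity) (by norm_num), Real.mul_rpow hp0.le hM0, e4,
      Real.rpow_sub (by norm_num), Real.rpow_add hp0, Real.rpow_one, Real.rpow_one]
    field_simp
    ring
  have e2 : (2 ^ (1 - 2 / p) * p ^ (1 + 1 / p) * A * M ^ (1 / p) * (n:ℝ) ^ (-(β / p))) ^ (1 / p)
      = 2 ^ (1 / p - 2 / p ^ 2) * p ^ (1 / p + 1 / p ^ 2) * A ^ (1 / p) * M ^ (1 / p ^ 2)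
        * (n:ℝ) ^ (-β / p ^ 2) := by
    rw [Real.mul_rpow (by positivity) (by positivity), Real.mul_rpow (by positivity) (by positivity),
      Real.mul_rpow (by positivity) (by positivity), Real.mul_rpow (by positivity) (by positivity),
      ← Real.rpow_mul (by norm_num), ← Real.rpow_mul hp0.le, ← Real.rpow_mul hM0,
      ← Real.rpow_mul hn0.le]
    congr! 2 <;> field_simp
  rw [e1, e2]
  have e3 : 2 * (2:ℝ) ^ (1 / p - 2 / p ^ 2) ≤ 2 ^ (1 + 1 / p - 1 / p ^ 2) := by
    rw [show 2 * (2:ℝ) ^ (1 / p - 2 / p ^ 2) = 2 ^ (1 + (1 / p - 2 / p ^ 2)) by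
      rw [Real.rpow_add (by norm_num), Real.rpow_one]]
    refine Real.rpow_le_rpow_of_exponent_le (by norm_num) ?_
    have : 1 / p ^ 2 ≤ 2 / p ^ 2 := by gcongr; norm_num
    linarith
  calc _ = (2 * (2:ℝ) ^ (1 / p - 2 / p ^ 2)) * (p ^ (1 / p + 1 / p ^ 2) * A ^ (1 / p)
        * M ^ (1 / p ^ 2) * (n:ℝ) ^ (-β / p ^ 2)) := by ring
    _ ≤ 2 ^ (1 + 1 / p - 1 / p ^ 2) * (p ^ (1 / p + 1 / p ^ 2) * A ^ (1 / p)
        * M ^ (1 / p ^ 2) * (n:ℝ) ^ (-β / p ^ 2)) := by gcongr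
    _ = _ := by ring
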